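/- Let b ≥ 2 and α ≥ 2 be integers and let z = (ζ_1,…,ζ_n,0,0,…) ∈ G with not all of ζ_1,…,ζ_n equal to 0. Then χ_b(Φ_b(z)) = Σ_{v=1}^{α−1} Σ_{0<a_v<⋯<a_1} ∏_{i=1}^{v} b^{−a_i} L(z, a_i+1) + Σ_{0<a_α<⋯<a_1} b^{a_α−1} [Φ_b(z) ∈ H_{a_α−1}] ∏_{i=1}^{α} b^{−a_i} L(z, a_i+1), where the sums are over all strictly increasing tuples of positive integers (of the indicated lengths), [Φ_b(z) ∈ H_a] equals 1 if the first a digits of Φ_b(z) are zero and 0 otherwise, and L(z, i) = b−1 if ζ_i = ζ_1 and L(z, i) = −1 otherwise (with ζ_i = 0 for i > n). -/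

import Mathlib

open scoped Classical

namespace QMC

/-- the `i`-th `b`-adic digit of `k`. -/
def digit (b k i : ℕ) : ℕ := k / b ^ i % b

/-- the `k`-th character `W_k` on `G = (ℤ/bℤ)^ℕ`, where `z i = ζ_{i+1}`. -/
noncomputable def W (b k : ℕ) (z : ℕ → ZMod b) : ℂ :=
  Complex.exp (2 * Real.pi * Complex.I / b) ^
    ∑ i ∈ Finset.range (k + 1), digit b k i * (z i).val

/-- `μ_α(k) = a₁ + ⋯ + a_{min(v,α)}`, the sum of the `α` largest positions (counted
from `1`) of nonzero `b`-adic digits of `k`; `μ_α(0) = 0`. -/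
def mualpha (b α k : ℕ) : ℕ :=
  (((((Finset.range (k + 1)).filter fun i => digit b k i ≠ 0).sort (· ≤ ·)).reverse.take
    α).map (· + 1)).sum

/-- `χ_b(z) = Σ_{k ≥ 1} b^{-μ_α(k)} W_k(z)`. -/
noncomputable def chi (b α : ℕ) (z : ℕ → ZMod b) : ℂ :=
  ∑' k : ℕ, ((b : ℂ) ^ mualpha b α (k + 1))⁻¹ * W b (k + 1) z

/-- the `b`-adic tent transformation `Φ_b : G → G`. -/
def tent (b : ℕ) (z : ℕ → ZMod b) : ℕ → ZMod b := fun i => z (i + 1) - z 0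

/-- `L(z, i) = b - 1` if `ζ_i = ζ_1` and `L(z, i) = -1` otherwise
(here `z j = ζ_{j+1}`). -/
noncomputable def L (b : ℕ) (z : ℕ → ZMod b) (i : ℕ) : ℂ :=
  if z (i - 1) = z 0 then (b : ℂ) - 1 else -1

/-- strictly decreasing `v`-tuples `a_1 > a_2 > ⋯ > a_v > 0` of positive integers
(`a i` is `a_{i+1}`). -/
def DecTuple (v : ℕ) : Type := {a : Fin v → ℕ // StrictAnti a ∧ ∀ i, 0 < a i}

/-!
Write `S(α, m)` for the sum of `b ^ (-μ_α(k)) * W_k(Φ_b(z))` over `k < b ^ m`. Splitting off the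
leading digit of `k` gives `S(α + 1, m + 1) = S(α + 1, m) + c(m + 1) * S(α, m)`, where
`c(a) = b ^ (-a) * L(z, a + 1)` by summing a character of `ℤ/bℤ` over the nonzero digits. Unrolled,
this recurrence expresses `S(α, m)` through sums over tuples `m ≥ a_1 > ⋯ > a_v > 0`, those with
`v = α` carrying the weight `S(0, a_α - 1) = b ^ (a_α - 1) * [Φ_b(z) ∈ H_{a_α - 1}]`. With the
trivial character in place of `W_k` all terms are nonnegative and, for `α ≥ 2`, the total stays
below `2 + 1 / b`. Everything therefore converges absolutely, and one lets `m → ∞`.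
-/

open Filter Topology

section DecreasingTuples

/-- The strictly decreasing `v`-tuples of integers in `[1, m]`; as `m` grows they exhaust
`DecTuple v`. -/
noncomputable def boundedDecTuples (v m : ℕ) : Finset (Fin v → ℕ) :=
  {a ∈ Fintype.piFinset fun _ => Finset.Icc 1 m | StrictAnti a}

lemma mem_boundedDecTuples {v m : ℕ} {a : Fin v → ℕ} :
    a ∈ boundedDecTuples v m ↔ StrictAnti a ∧ ∀ i, 0 < a i ∧ a i ≤ m := by
  simp [boundedDecTuples, Nat.one_le_iff_ne_zero, Nat.pos_iff_ne_zero, and_comm]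

lemma boundedDecTuples_zero_left (m : ℕ) : boundedDecTuples 0 m = {Fin.elim0} := by
  ext a
  simp [mem_boundedDecTuples, Subsingleton.strictAnti, Subsingleton.elim a Fin.elim0]

lemma boundedDecTuples_succ_zero (v : ℕ) : boundedDecTuples (v + 1) 0 = ∅ := by
  ext a
  simp only [mem_boundedDecTuples, Finset.notMem_empty, iff_false, not_and]
  exact fun _ h => absurd (h 0) (by omega)

lemma strictAnti_cons {ι : Type*} [Preorder ι] {v : ℕ} {a : Fin v → ι} {n : ι} :
    StrictAnti (Fin.cons n a : Fin (v + 1) → ι) ↔ (∀ i, a i < n) ∧ StrictAnti a :=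
  Fin.liftFun_cons (· > ·)

lemma boundedDecTuples_succ_succ (v m : ℕ) :
    boundedDecTuples (v + 1) (m + 1) = boundedDecTuples (v + 1) m ∪
      (boundedDecTuples v m).image (Fin.cons (α := fun _ => ℕ) (m + 1)) := by
  ext a
  simp only [Finset.mem_union, Finset.mem_image, mem_boundedDecTuples]
  constructor
  · rintro ⟨hanti, hmem⟩
    by_cases hfirst : a 0 ≤ m
    · exact .inl ⟨hanti, fun i => ⟨(hmem i).1, (hanti.antitone (Fin.zero_le i)).trans hfirst⟩⟩
    · have ha0 : a 0 = m + 1 := by linarith [(hmem 0).2]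
      refine .inr ⟨Fin.tail a, ⟨fun i j hij => hanti (Fin.succ_lt_succ_iff.2 hij),
        fun i => ⟨(hmem _).1, Nat.le_of_lt_succ ?_⟩⟩, by rw [← ha0, Fin.cons_self_tail]⟩
      exact (hanti (Fin.succ_pos i)).trans_eq ha0
  · rintro (⟨hanti, hmem⟩ | ⟨a, ⟨hanti, hmem⟩, rfl⟩)
    · exact ⟨hanti, fun i => ⟨(hmem i).1, (hmem i).2.trans m.le_succ⟩⟩
    · refine ⟨strictAnti_cons.2 ⟨fun i => Nat.lt_succ_of_le (hmem i).2, hanti⟩,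
        Fin.cases (by simp) fun i => ?_⟩
      simpa using ⟨(hmem i).1, (hmem i).2.trans m.le_succ⟩

lemma sum_boundedDecTuples_succ_succ {M : Type*} [AddCommMonoid M] (v m : ℕ)
    (f : (Fin (v + 1) → ℕ) → M) :
    ∑ a ∈ boundedDecTuples (v + 1) (m + 1), f a =
      ∑ a ∈ boundedDecTuples (v + 1) m, f a +
        ∑ a ∈ boundedDecTuples v m, f (Fin.cons (m + 1) a) := by
  rw [boundedDecTuples_succ_succ, Finset.sum_union, Finset.sum_image]
  · exact (Fin.cons_right_injective (α := fun _ => ℕ) (m + 1)).injOn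
  · rw [Finset.disjoint_left]
    intro a ha hcons
    obtain ⟨a, -, rfl⟩ := Finset.mem_image.1 hcons
    simpa using ((mem_boundedDecTuples.1 ha).2 0).2

lemma tendsto_subtype_boundedDecTuples (v : ℕ) :
    Tendsto (fun m => ((boundedDecTuples v m).subtype _ : Finset (DecTuple v))) atTop atTop := by
  have mem_iff (m : ℕ) (a : DecTuple v) :
      a ∈ ((boundedDecTuples v m).subtype _ : Finset (DecTuple v)) ↔ ∀ i, a.1 i ≤ m :=
    Finset.mem_subtype.trans <| mem_boundedDecTuples.trans
      ⟨fun h i => (h.2 i).2, fun h => ⟨a.2.1, fun i => ⟨a.2.2 i, h i⟩⟩⟩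
  refine tendsto_atTop_finset_of_monotone (fun m m' hm a ha => ?_) fun a => ⟨∑ i, a.1 i, ?_⟩
  · exact (mem_iff m' a).2 fun i => ((mem_iff m a).1 ha i).trans hm
  · exact (mem_iff _ a).2 fun i =>
      Finset.single_le_sum (f := a.1) (fun _ _ => Nat.zero_le _) (Finset.mem_univ i)

lemma sum_subtype_boundedDecTuples {M : Type*} [AddCommMonoid M] (v m : ℕ)
    (f : (Fin v → ℕ) → M) :
    ∑ a ∈ ((boundedDecTuples v m).subtype _ : Finset (DecTuple v)), f a.1 =
      ∑ a ∈ boundedDecTuples v m, f a :=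
  Finset.sum_subtype_of_mem f fun _ ha =>
    (mem_boundedDecTuples.1 ha).imp_right fun h i => (h i).1

lemma tendsto_sum_tsum_of_sum_norm_le {ι E : Type*} [NormedAddCommGroup E] [CompleteSpace E]
    {s : ℕ → Finset ι} (hs : Tendsto s atTop atTop) {f : ι → E} {C : ℝ}
    (hC : ∀ m, ∑ i ∈ s m, ‖f i‖ ≤ C) :
    Tendsto (fun m => ∑ i ∈ s m, f i) atTop (𝓝 (∑' i, f i)) := by
  have hf : Summable fun i => ‖f i‖ := by
    refine summable_of_sum_le (c := C) (fun i => norm_nonneg _) fun u => ?_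
    obtain ⟨m, hm⟩ := (hs.eventually_ge_atTop u).exists
    exact (Finset.sum_le_sum_of_subset_of_nonneg hm fun _ _ _ => norm_nonneg _).trans (hC m)
  exact hf.of_norm.hasSum.comp hs

lemma tendsto_sum_boundedDecTuples {E : Type*} [NormedAddCommGroup E] [CompleteSpace E] {v : ℕ}
    {f : (Fin v → ℕ) → E} {C : ℝ} (hC : ∀ m, ∑ a ∈ boundedDecTuples v m, ‖f a‖ ≤ C) :
    Tendsto (fun m => ∑ a ∈ boundedDecTuples v m, f a) atTop
      (𝓝 (∑' a : DecTuple v, f a.1)) := by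
  refine (tendsto_sum_tsum_of_sum_norm_le (C := C) (tendsto_subtype_boundedDecTuples v)
    fun m => ?_).congr fun m => sum_subtype_boundedDecTuples v m f
  exact (sum_subtype_boundedDecTuples v m fun a => ‖f a‖).trans_le (hC m)

end DecreasingTuples

section DecTupleSum

variable {R : Type*} [CommSemiring R]

/-- The sum of `g (a_v) * c (a_1) ⋯ c (a_v)` over the tuples `m ≥ a_1 > ⋯ > a_v > 0`. The weight
`g` is read off the tuple extended by `a_0 = m + 1`, so that the empty tuple contributes
`g (m + 1)` and the recurrence in `v` and `m` holds from `v = 0` on. -/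
noncomputable def decTupleSum (g c : ℕ → R) (v m : ℕ) : R :=
  ∑ a ∈ boundedDecTuples v m,
    g ((Fin.cons (m + 1) a : Fin (v + 1) → ℕ) (Fin.last v)) * ∏ i, c (a i)

lemma decTupleSum_zero_left (g c : ℕ → R) (m : ℕ) : decTupleSum g c 0 m = g (m + 1) := by
  simp [decTupleSum, boundedDecTuples_zero_left]

lemma decTupleSum_succ_left (g c : ℕ → R) (v m : ℕ) :
    decTupleSum g c (v + 1) m =
      ∑ a ∈ boundedDecTuples (v + 1) m, g (a (Fin.last v)) * ∏ i, c (a i) := by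
  simp [decTupleSum, ← Fin.succ_last]

lemma decTupleSum_succ_zero (g c : ℕ → R) (v : ℕ) : decTupleSum g c (v + 1) 0 = 0 := by
  simp [decTupleSum, boundedDecTuples_succ_zero]

lemma decTupleSum_succ_succ (g c : ℕ → R) (v m : ℕ) :
    decTupleSum g c (v + 1) (m + 1) =
      decTupleSum g c (v + 1) m + c (m + 1) * decTupleSum g c v m := by
  rw [decTupleSum_succ_left, decTupleSum_succ_left, sum_boundedDecTuples_succ_succ, decTupleSum,
    Finset.mul_sum]
  simp only [Fin.prod_univ_succ (n := v), Fin.cons_zero, Fin.cons_succ, mul_left_comm]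

/-- Iterating the recurrence removes the largest entry `a_1`, then `a_2`, and so on, until either
the bound reaches `0` (the terms with weight `1`) or `α` entries have been removed. -/
theorem eq_sum_decTupleSum_of_recurrence (c : ℕ → R) {S : ℕ → ℕ → R}
    (hzero : ∀ α, S (α + 1) 0 = 1)
    (hsucc : ∀ α m, S (α + 1) (m + 1) = S (α + 1) m + c (m + 1) * S α m) (α m : ℕ) :
    S α m = ∑ v ∈ Finset.range α, decTupleSum 1 c v m +
      decTupleSum (fun a => S 0 (a - 1)) c α m := by
  induction m generalizing α with
  | zero =>
    cases α with
    | zero => simp [decTupleSum_zero_left]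
    | succ α =>
      simp [hzero, Finset.sum_range_succ', decTupleSum_succ_zero, decTupleSum_zero_left]
  | succ m ih =>
    cases α with
    | zero => simp [decTupleSum_zero_left]
    | succ α =>
      rw [hsucc, ih (α + 1), ih α]
      simp only [Finset.sum_range_succ' _ α, decTupleSum_succ_succ, decTupleSum_zero_left,
        Finset.sum_add_distrib, ← Finset.mul_sum, Pi.one_apply]
      ring

lemma decTupleSum_nonneg {g c : ℕ → ℝ} (hg : ∀ a, 0 ≤ g a) (hc : ∀ a, 0 ≤ c a) (v m : ℕ) :
    0 ≤ decTupleSum g c v m :=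
  Finset.sum_nonneg fun _ _ => mul_nonneg (hg _) (Finset.prod_nonneg fun _ _ => hc _)

lemma tendsto_decTupleSum {K : Type*} [NormedField K] [CompleteSpace K] {g c : ℕ → K}
    {g' c' : ℕ → ℝ} (hg : ∀ a, ‖g a‖ ≤ g' a) (hc : ∀ a, ‖c a‖ ≤ c' a) {v : ℕ} {C : ℝ}
    (hC : ∀ m, decTupleSum g' c' (v + 1) m ≤ C) :
    Tendsto (decTupleSum g c (v + 1)) atTop
      (𝓝 (∑' a : DecTuple (v + 1), g (a.1 (Fin.last v)) * ∏ i, c (a.1 i))) := by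
  refine (tendsto_sum_boundedDecTuples (C := C) fun m => ?_).congr fun m =>
    (decTupleSum_succ_left g c v m).symm
  refine le_trans ?_ ((decTupleSum_succ_left g' c' v m).symm.trans_le (hC m))
  refine Finset.sum_le_sum fun a _ => ?_
  rw [norm_mul, norm_prod]
  exact mul_le_mul (hg _) (Finset.prod_le_prod (fun _ _ => norm_nonneg _) fun _ _ => hc _)
    (Finset.prod_nonneg fun _ _ => norm_nonneg _) ((norm_nonneg _).trans (hg _))

end DecTupleSum

section Digits

variable {b : ℕ}

lemma digit_zero (i : ℕ) : digit b 0 i = 0 := by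
  simp [digit]

lemma digit_eq_zero_of_lt_pow {k i : ℕ} (hk : k < b ^ i) : digit b k i = 0 := by
  simp [digit, Nat.div_eq_of_lt hk]

lemma lt_of_digit_ne_zero (hb : 0 < b) {k m i : ℕ} (hk : k < b ^ m) (hi : digit b k i ≠ 0) :
    i < m := by
  contrapose! hi
  exact digit_eq_zero_of_lt_pow (hk.trans_le (Nat.pow_le_pow_right hb hi))

lemma digit_mul_pow_add_of_lt (hb : 0 < b) (κ k : ℕ) {m i : ℕ} (hi : i < m) :
    digit b (κ * b ^ m + k) i = digit b k i := by
  obtain ⟨d, rfl⟩ := Nat.exists_eq_add_of_lt hi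
  have hsplit : κ * b ^ (i + d + 1) + k = k + κ * b ^ d * b * b ^ i := by ring
  rw [digit, hsplit, Nat.add_mul_div_right _ _ (by positivity), Nat.add_mul_mod_self_right, digit]

lemma digit_mul_pow_add_of_le (κ : ℕ) {m k i : ℕ} (hk : k < b ^ m) (hi : m ≤ i) :
    digit b (κ * b ^ m + k) i = digit b κ (i - m) := by
  obtain ⟨d, rfl⟩ := Nat.exists_eq_add_of_le hi
  rw [digit, pow_add, ← Nat.div_div_eq_div_mul, add_comm,
    Nat.add_mul_div_right _ _ (Nat.zero_lt_of_lt hk), Nat.div_eq_of_lt hk, zero_add,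
    Nat.add_sub_cancel_left, digit]

lemma digit_mul_pow_of_lt (hb : 0 < b) (κ : ℕ) {m i : ℕ} (hi : i < m) :
    digit b (κ * b ^ m) i = 0 := by
  simpa [digit_zero] using digit_mul_pow_add_of_lt hb κ 0 hi

lemma digit_mul_pow_of_le (hb : 0 < b) (κ : ℕ) {m i : ℕ} (hi : m ≤ i) :
    digit b (κ * b ^ m) i = digit b κ (i - m) := by
  simpa using digit_mul_pow_add_of_le κ (pow_pos hb m) hi

lemma digit_mul_pow_add (hb : 0 < b) (κ : ℕ) {m k : ℕ} (hk : k < b ^ m) (i : ℕ) :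
    digit b (κ * b ^ m + k) i = digit b (κ * b ^ m) i + digit b k i := by
  rcases lt_or_ge i m with hi | hi
  · rw [digit_mul_pow_add_of_lt hb κ k hi, digit_mul_pow_of_lt hb κ hi, zero_add]
  · rw [digit_mul_pow_add_of_le κ hk hi, digit_mul_pow_of_le hb κ hi,
      digit_eq_zero_of_lt_pow (hk.trans_le (Nat.pow_le_pow_right hb hi)), add_zero]

lemma digit_mul_pow {κ : ℕ} (hκ : κ < b) (m i : ℕ) :
    digit b (κ * b ^ m) i = if i = m then κ else 0 := by
  have hb : 0 < b := Nat.zero_lt_of_lt hκ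
  split_ifs with him
  · rw [digit_mul_pow_of_le hb κ him.ge, him, Nat.sub_self, digit, pow_zero, Nat.div_one,
      Nat.mod_eq_of_lt hκ]
  rcases lt_or_gt_of_ne him with hi | hi
  · exact digit_mul_pow_of_lt hb κ hi
  · rw [digit_mul_pow_of_le hb κ hi.le]
    exact digit_eq_zero_of_lt_pow (hκ.trans_le (Nat.le_self_pow (by omega) b))

/-- The set of positions, counted from `0`, of the nonzero `b`-adic digits of `k`. For `b ≥ 2` the
cutoff at `k` loses nothing, since `k < b ^ i` for `i > k`. -/
def digitSupport (b k : ℕ) : Finset ℕ := {i ∈ Finset.range (k + 1) | digit b k i ≠ 0}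

lemma mem_digitSupport (hb : 1 < b) {k i : ℕ} : i ∈ digitSupport b k ↔ digit b k i ≠ 0 := by
  simp only [digitSupport, Finset.mem_filter, Finset.mem_range, and_iff_right_iff_imp]
  exact lt_of_digit_ne_zero (Nat.zero_lt_of_lt hb) (k.lt_succ_self.trans (Nat.lt_pow_self hb))

lemma digitSupport_mul_pow_add (hb : 1 < b) {κ m k : ℕ} (hκ : κ ≠ 0) (hκb : κ < b)
    (hk : k < b ^ m) : digitSupport b (κ * b ^ m + k) = insert m (digitSupport b k) := by
  ext i
  simp only [Finset.mem_insert, mem_digitSupport hb, digit_mul_pow hκb,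
    digit_mul_pow_add (Nat.zero_lt_of_lt hb) κ hk]
  split_ifs with him <;> simp [him, hκ]

end Digits

section Mualpha

variable {b : ℕ}

lemma mualpha_eq_sum_take_digitSupport (b α k : ℕ) :
    mualpha b α k = (((digitSupport b k).sort.reverse.take α).map (· + 1)).sum :=
  rfl

lemma mualpha_zero_left (b k : ℕ) : mualpha b 0 k = 0 := by
  simp [mualpha_eq_sum_take_digitSupport]

lemma mualpha_zero_right (b α : ℕ) : mualpha b α 0 = 0 := by
  simp [mualpha_eq_sum_take_digitSupport, digitSupport, digit_zero]

lemma mualpha_mono_left (b k : ℕ) : Monotone fun α => mualpha b α k := fun _ _ hα =>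
  ((List.take_prefix_take_left hα).sublist.map _).sum_le_sum fun _ _ => Nat.zero_le _

lemma sort_insert_of_forall_lt {ι : Type*} [LinearOrder ι] {s : Finset ι} {m : ι}
    (hs : ∀ i ∈ s, i < m) : (insert m s).sort = s.sort ++ [m] := by
  have hnodup : (s.sort ++ [m]).Nodup :=
    (s.sort_nodup _).append (List.nodup_singleton m) <| by
      simpa [List.Disjoint] using fun h => (hs m h).false
  have htoFinset : insert m s = (s.sort ++ [m]).toFinset := by
    ext i
    simp
  rw [htoFinset, List.toFinset_sort _ hnodup, List.pairwise_append]
  exact ⟨s.pairwise_sort _, List.pairwise_singleton _ m, by simpa using fun i hi => (hs i hi).le⟩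

lemma mualpha_succ_mul_pow_add (hb : 1 < b) (α : ℕ) {κ m k : ℕ} (hκ : κ ≠ 0) (hκb : κ < b)
    (hk : k < b ^ m) : mualpha b (α + 1) (κ * b ^ m + k) = m + 1 + mualpha b α k := by
  have hlt : ∀ i ∈ digitSupport b k, i < m := fun i hi =>
    lt_of_digit_ne_zero (Nat.zero_lt_of_lt hb) hk ((mem_digitSupport hb).1 hi)
  simp [mualpha_eq_sum_take_digitSupport, digitSupport_mul_pow_add hb hκ hκb hk,
    sort_insert_of_forall_lt hlt]

end Mualpha

section DigitMultiplicative

/-- `b`-multiplicative functions in the sense of Gelfond: the value at `k` is the product of the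
values at the summands `κ_i * b ^ i` of the `b`-adic expansion of `k`. -/
structure IsDigitMultiplicative {M : Type*} [Monoid M] (b : ℕ) (ψ : ℕ → M) : Prop where
  map_zero : ψ 0 = 1
  map_mul_pow_add : ∀ κ {m k : ℕ}, k < b ^ m → ψ (κ * b ^ m + k) = ψ (κ * b ^ m) * ψ k

lemma isDigitMultiplicative_one {M : Type*} [Monoid M] (b : ℕ) :
    IsDigitMultiplicative b (1 : ℕ → M) where
  map_zero := rfl
  map_mul_pow_add _ _ _ _ := by simp

lemma sum_range_succ_mul {M : Type*} [AddCommMonoid M] (f : ℕ → M) (n N : ℕ) :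
    ∑ k ∈ Finset.range ((n + 1) * N), f k =
      ∑ k ∈ Finset.range N, f k +
        ∑ κ ∈ Finset.Ico 1 (n + 1), ∑ k ∈ Finset.range N, f (κ * N + k) := by
  induction n with
  | zero => simp
  | succ n ih =>
    rw [Nat.succ_mul, Finset.sum_range_add, Finset.sum_Ico_succ_top (Nat.le_add_left 1 n), ih,
      add_assoc]

lemma sum_range_pow_succ {M : Type*} [AddCommMonoid M] {b : ℕ} (hb : 0 < b) (f : ℕ → M) (m : ℕ) :
    ∑ k ∈ Finset.range (b ^ (m + 1)), f k =
      ∑ k ∈ Finset.range (b ^ m), f k +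
        ∑ κ ∈ Finset.Ico 1 b, ∑ k ∈ Finset.range (b ^ m), f (κ * b ^ m + k) := by
  obtain ⟨n, rfl⟩ := Nat.exists_eq_add_one.2 hb
  rw [pow_succ', sum_range_succ_mul]

variable {K : Type*} [Field K] {b : ℕ} {ψ : ℕ → K}

/-- The sum of `b ^ (-μ_α(k)) * ψ k` over the `k` with at most `m` digits in base `b`. -/
noncomputable def mualphaSum (b : ℕ) (ψ : ℕ → K) (α m : ℕ) : K :=
  ∑ k ∈ Finset.range (b ^ m), ((b : K) ^ mualpha b α k)⁻¹ * ψ k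

/-- The factor which a nonzero digit in position `a` (counted from `1`) contributes to
`mualphaSum`, summed over the possible values of that digit. -/
noncomputable def digitWeight (b : ℕ) (ψ : ℕ → K) (a : ℕ) : K :=
  ((b : K) ^ a)⁻¹ * ∑ κ ∈ Finset.Ico 1 b, ψ (κ * b ^ (a - 1))

lemma mualphaSum_zero_left (b : ℕ) (ψ : ℕ → K) (m : ℕ) :
    mualphaSum b ψ 0 m = ∑ k ∈ Finset.range (b ^ m), ψ k := by
  simp [mualphaSum, mualpha_zero_left]

lemma mualphaSum_zero_right (hψ : IsDigitMultiplicative b ψ) (α : ℕ) : mualphaSum b ψ α 0 = 1 := by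
  simp [mualphaSum, mualpha_zero_right, hψ.map_zero]

lemma mualphaSum_zero_succ (hb : 0 < b) (hψ : IsDigitMultiplicative b ψ) (m : ℕ) :
    mualphaSum b ψ 0 (m + 1) =
      (1 + ∑ κ ∈ Finset.Ico 1 b, ψ (κ * b ^ m)) * mualphaSum b ψ 0 m := by
  rw [mualphaSum_zero_left, mualphaSum_zero_left, sum_range_pow_succ hb, add_mul, one_mul,
    Finset.sum_mul_sum]
  congr! 3 with κ _ k hk
  exact hψ.map_mul_pow_add κ (Finset.mem_range.1 hk)

/-- The new terms are those `k` whose leading digit is in position `m + 1`; that digit uses up one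
of the `α + 1` positions counted by `μ`. -/
lemma mualphaSum_succ_succ (hb : 1 < b) (hψ : IsDigitMultiplicative b ψ) (α m : ℕ) :
    mualphaSum b ψ (α + 1) (m + 1) =
      mualphaSum b ψ (α + 1) m + digitWeight b ψ (m + 1) * mualphaSum b ψ α m := by
  simp only [mualphaSum, digitWeight]
  rw [sum_range_pow_succ (Nat.zero_lt_of_lt hb), Nat.add_sub_cancel, mul_assoc, Finset.sum_mul_sum,
    Finset.mul_sum]
  congr! 2 with κ hκ
  obtain ⟨hκ1, hκb⟩ := Finset.mem_Ico.1 hκ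
  rw [Finset.mul_sum]
  refine Finset.sum_congr rfl fun k hk => ?_
  have hk' := Finset.mem_range.1 hk
  rw [mualpha_succ_mul_pow_add hb α (by omega) hκb hk', hψ.map_mul_pow_add κ hk', pow_add, mul_inv]
  ring

lemma mualphaSum_eq_sum_decTupleSum (hb : 1 < b) (hψ : IsDigitMultiplicative b ψ) (α m : ℕ) :
    mualphaSum b ψ α m =
      ∑ v ∈ Finset.range α, decTupleSum 1 (digitWeight b ψ) v m +
        decTupleSum (fun a => mualphaSum b ψ 0 (a - 1)) (digitWeight b ψ) α m :=
  eq_sum_decTupleSum_of_recurrence _ (fun α => mualphaSum_zero_right hψ (α + 1))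
    (mualphaSum_succ_succ hb hψ) α m

end DigitMultiplicative

section Majorant

variable {b : ℕ}

lemma mualphaSum_one_nonneg (b α m : ℕ) : 0 ≤ mualphaSum b (1 : ℕ → ℝ) α m :=
  Finset.sum_nonneg fun _ _ => by simp

lemma digitWeight_one_nonneg (b a : ℕ) : 0 ≤ digitWeight b (1 : ℕ → ℝ) a :=
  mul_nonneg (by positivity) (Finset.sum_nonneg fun _ _ => zero_le_one)

lemma digitWeight_one (hb : 0 < b) (a : ℕ) :
    digitWeight b (1 : ℕ → ℝ) a = ((b : ℝ) ^ a)⁻¹ * (b - 1) := by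
  simp [digitWeight, Nat.cast_sub (Nat.one_le_of_lt hb)]

lemma mualphaSum_one_one (hb : 1 < b) (m : ℕ) :
    mualphaSum b (1 : ℕ → ℝ) 1 m = 1 + m * ((b - 1) / b) := by
  induction m with
  | zero => simp [mualphaSum_zero_right (isDigitMultiplicative_one b)]
  | succ m ih =>
    rw [mualphaSum_succ_succ hb (isDigitMultiplicative_one b), ih, mualphaSum_zero_left,
      digitWeight_one (by omega)]
    push_cast
    simp only [Pi.one_apply, Finset.sum_const, Finset.card_range, nsmul_eq_mul, Nat.cast_pow]
    field_simp
    ring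

lemma mualphaSum_one_two (hb : 1 < b) (m : ℕ) :
    mualphaSum b (1 : ℕ → ℝ) 2 m =
      2 + 1 / b - (1 + 1 / b + m * ((b - 1) / b)) / b ^ m := by
  induction m with
  | zero =>
    rw [mualphaSum_zero_right (isDigitMultiplicative_one b)]
    simp only [Nat.cast_zero, pow_zero]
    ring
  | succ m ih =>
    rw [mualphaSum_succ_succ hb (isDigitMultiplicative_one b), ih, mualphaSum_one_one hb,
      digitWeight_one (by omega)]
    push_cast
    field_simp
    ring

lemma mualphaSum_one_antitone (hb : 0 < b) (m : ℕ) :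
    Antitone fun α => mualphaSum b (1 : ℕ → ℝ) α m := fun α α' hα => by
  have hb1 : (1 : ℝ) ≤ b := by exact_mod_cast hb
  refine Finset.sum_le_sum fun k _ => ?_
  simp only [Pi.one_apply, mul_one]
  gcongr
  exact mualpha_mono_left b k hα

lemma mualphaSum_one_le (hb : 1 < b) {α : ℕ} (hα : 2 ≤ α) (m : ℕ) :
    mualphaSum b (1 : ℕ → ℝ) α m ≤ 2 + 1 / b := by
  have hb1 : (1 : ℝ) ≤ b := by exact_mod_cast hb.le
  refine (mualphaSum_one_antitone (by omega) m hα).trans ?_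
  dsimp only
  rw [mualphaSum_one_two hb, sub_le_self_iff]
  have : (0 : ℝ) ≤ b - 1 := sub_nonneg.2 hb1
  positivity

lemma summable_inv_pow_mualpha (hb : 1 < b) {α : ℕ} (hα : 2 ≤ α) :
    Summable fun k => ((b : ℝ) ^ mualpha b α k)⁻¹ := by
  refine summable_of_sum_range_le (c := 2 + 1 / b) (fun k => by positivity) fun n => ?_
  calc ∑ k ∈ Finset.range n, ((b : ℝ) ^ mualpha b α k)⁻¹
      ≤ ∑ k ∈ Finset.range (b ^ n), ((b : ℝ) ^ mualpha b α k)⁻¹ :=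
        Finset.sum_le_sum_of_subset_of_nonneg (Finset.range_mono (Nat.lt_pow_self hb).le)
          fun _ _ _ => by positivity
    _ = mualphaSum b (1 : ℕ → ℝ) α n := by simp [mualphaSum]
    _ ≤ 2 + 1 / b := mualphaSum_one_le hb hα n

lemma decTupleSum_one_nonneg (b v m : ℕ) :
    0 ≤ decTupleSum 1 (digitWeight b (1 : ℕ → ℝ)) v m :=
  decTupleSum_nonneg (fun _ => zero_le_one) (digitWeight_one_nonneg b) v m

lemma decTupleSum_one_le (hb : 1 < b) {v α : ℕ} (hα : 2 ≤ α) (hv : v < α) (m : ℕ) :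
    decTupleSum 1 (digitWeight b (1 : ℕ → ℝ)) v m ≤ 2 + 1 / b := by
  have hnonneg := decTupleSum_nonneg (fun a => mualphaSum_one_nonneg b 0 (a - 1))
    (digitWeight_one_nonneg b) α m
  have hle := Finset.single_le_sum (fun v _ => decTupleSum_one_nonneg b v m)
    (Finset.mem_range.2 hv)
  have hsum := mualphaSum_eq_sum_decTupleSum hb (isDigitMultiplicative_one (M := ℝ) b) α m
  have hle_total := mualphaSum_one_le hb hα m
  exact hle.trans (by linarith)

lemma decTupleSum_mualphaSum_le (hb : 1 < b) {α : ℕ} (hα : 2 ≤ α) (m : ℕ) :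
    decTupleSum (fun a => mualphaSum b (1 : ℕ → ℝ) 0 (a - 1)) (digitWeight b 1) α m ≤
      2 + 1 / b := by
  have hnonneg := Finset.sum_nonneg fun v (_ : v ∈ Finset.range α) =>
    decTupleSum_one_nonneg b v m
  have hsum := mualphaSum_eq_sum_decTupleSum hb (isDigitMultiplicative_one (M := ℝ) b) α m
  have hle_total := mualphaSum_one_le hb hα m
  linarith

end Majorant

section Limit

variable {K : Type*} [RCLike K] {b : ℕ} {ψ : ℕ → K}

lemma norm_digitWeight_le (b : ℕ) (hψ : ∀ k, ‖ψ k‖ ≤ 1) (a : ℕ) :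
    ‖digitWeight b ψ a‖ ≤ digitWeight b (1 : ℕ → ℝ) a := by
  rw [digitWeight, norm_mul, norm_inv, norm_pow, RCLike.norm_natCast]
  exact mul_le_mul_of_nonneg_left (norm_sum_le_of_le _ fun κ _ => hψ _) (by positivity)

lemma norm_mualphaSum_le (b : ℕ) (hψ : ∀ k, ‖ψ k‖ ≤ 1) (α m : ℕ) :
    ‖mualphaSum b ψ α m‖ ≤ mualphaSum b (1 : ℕ → ℝ) α m := by
  refine norm_sum_le_of_le _ fun k _ => ?_
  rw [norm_mul, norm_inv, norm_pow, RCLike.norm_natCast]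
  exact mul_le_mul_of_nonneg_left (hψ k) (by positivity)

lemma tendsto_mualphaSum (hb : 1 < b) (hψ : IsDigitMultiplicative b ψ) (hψ1 : ∀ k, ‖ψ k‖ ≤ 1)
    {α : ℕ} (hα : 2 ≤ α) :
    Tendsto (mualphaSum b ψ α) atTop
      (𝓝 (1 + ∑' k : ℕ, ((b : K) ^ mualpha b α (k + 1))⁻¹ * ψ (k + 1))) := by
  have hsummable : Summable fun k => ((b : K) ^ mualpha b α k)⁻¹ * ψ k := by
    refine (summable_inv_pow_mualpha hb hα).of_norm_bounded fun k => ?_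
    rw [norm_mul, norm_inv, norm_pow, RCLike.norm_natCast]
    exact mul_le_of_le_one_right (by positivity) (hψ1 k)
  have htsum := hsummable.tsum_eq_zero_add
  simp only [mualpha_zero_right, hψ.map_zero, pow_zero, inv_one, mul_one] at htsum
  exact htsum ▸ hsummable.hasSum.tendsto_sum_nat.comp (tendsto_pow_atTop_atTop_of_one_lt hb)

theorem tsum_inv_pow_mualpha_mul_eq (hb : 1 < b) (hψ : IsDigitMultiplicative b ψ)
    (hψ1 : ∀ k, ‖ψ k‖ ≤ 1) (α : ℕ) :
    ∑' k : ℕ, ((b : K) ^ mualpha b (α + 2) (k + 1))⁻¹ * ψ (k + 1) =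
      ∑ v ∈ Finset.range (α + 1), ∑' a : DecTuple (v + 1), ∏ i, digitWeight b ψ (a.1 i) +
        ∑' a : DecTuple (α + 2), mualphaSum b ψ 0 (a.1 (Fin.last (α + 1)) - 1) *
          ∏ i, digitWeight b ψ (a.1 i) := by
  have hα : 2 ≤ α + 2 := Nat.le_add_left 2 α
  have hshort (v : ℕ) (hv : v ∈ Finset.range (α + 1)) :=
    tendsto_decTupleSum (g := 1) (fun _ => norm_one.le) (norm_digitWeight_le b hψ1)
      (decTupleSum_one_le hb hα (Nat.succ_lt_succ (Finset.mem_range.1 hv)))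
  have hlong := tendsto_decTupleSum (fun a => norm_mualphaSum_le b hψ1 0 (a - 1))
    (norm_digitWeight_le b hψ1) (decTupleSum_mualphaSum_le hb hα)
  have hsplit (m : ℕ) : mualphaSum b ψ (α + 2) m =
      1 + (∑ v ∈ Finset.range (α + 1), decTupleSum 1 (digitWeight b ψ) (v + 1) m +
        decTupleSum (fun a => mualphaSum b ψ 0 (a - 1)) (digitWeight b ψ) (α + 2) m) := by
    rw [mualphaSum_eq_sum_decTupleSum hb hψ, Finset.sum_range_succ', decTupleSum_zero_left,
      Pi.one_apply]
    ring
  have hlim := ((tendsto_finsetSum _ hshort).add hlong).const_add 1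
  have heq := tendsto_nhds_unique ((tendsto_mualphaSum hb hψ hψ1 hα).congr hsplit) hlim
  simpa only [Pi.one_apply, one_mul, add_right_inj] using heq

end Limit

section Walsh

variable {b : ℕ}

lemma norm_W (b k : ℕ) (y : ℕ → ZMod b) : ‖W b k y‖ = 1 := by
  have hω : (2 * Real.pi * Complex.I / b : ℂ) = (2 * Real.pi / b : ℝ) * Complex.I := by
    push_cast
    ring
  rw [W, norm_pow, hω, Complex.norm_exp_ofReal_mul_I, one_pow]

lemma W_eq_pow_sum_range (hb : 1 < b) {k N : ℕ} (hk : k ≤ N) (y : ℕ → ZMod b) :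
    W b k y = Complex.exp (2 * Real.pi * Complex.I / b) ^
      ∑ i ∈ Finset.range (N + 1), digit b k i * (y i).val := by
  rw [W, Finset.eventually_constant_sum (fun i hi => ?_) (Nat.succ_le_succ hk)]
  have hlt : k < b ^ i := (Nat.lt_of_succ_le hi).trans (Nat.lt_pow_self hb)
  rw [digit_eq_zero_of_lt_pow hlt, zero_mul]

lemma isDigitMultiplicative_W (hb : 1 < b) (y : ℕ → ZMod b) :
    IsDigitMultiplicative b fun k => W b k y where
  map_zero := by simp [W, digit_zero]
  map_mul_pow_add κ m k hk := by
    rw [W, W_eq_pow_sum_range hb (Nat.le_add_right (κ * b ^ m) k) y,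
      W_eq_pow_sum_range hb (Nat.le_add_left k (κ * b ^ m)) y, ← pow_add, ← Finset.sum_add_distrib]
    simp only [digit_mul_pow_add (Nat.zero_lt_of_lt hb) κ hk, add_mul]

lemma W_mul_pow {κ : ℕ} (hb : 1 < b) (hκ : κ < b) (m : ℕ) (y : ℕ → ZMod b) :
    W b (κ * b ^ m) y = Complex.exp (2 * Real.pi * Complex.I / b) ^ (κ * (y m).val) := by
  rw [W_eq_pow_sum_range hb (Nat.le_add_right (κ * b ^ m) m) y]
  simp [digit_mul_pow hκ]

lemma sum_range_exp_pow (hb : 0 < b) (x : ZMod b) :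
    ∑ κ ∈ Finset.range b, Complex.exp (2 * Real.pi * Complex.I / b) ^ (κ * x.val) =
      if x = 0 then (b : ℂ) else 0 := by
  have : NeZero b := ⟨hb.ne'⟩
  have hω := Complex.isPrimitiveRoot_exp b hb.ne'
  split_ifs with hx
  · simp [hx]
  · have hne := hω.pow_ne_one_of_pos_of_lt ((ZMod.val_ne_zero x).2 hx) x.val_lt
    simp_rw [mul_comm _ x.val, pow_mul]
    rw [geom_sum_eq hne, pow_right_comm, hω.pow_eq_one, one_pow, sub_self, zero_div]

lemma one_add_sum_W_mul_pow (hb : 1 < b) (m : ℕ) (y : ℕ → ZMod b) :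
    1 + ∑ κ ∈ Finset.Ico 1 b, W b (κ * b ^ m) y = if y m = 0 then (b : ℂ) else 0 := by
  have hb0 : 0 < b := Nat.zero_lt_of_lt hb
  rw [← sum_range_exp_pow hb0 (y m), Finset.sum_range_eq_add_Ico _ hb0, zero_mul, pow_zero]
  congr! 2 with κ hκ
  exact W_mul_pow hb (Finset.mem_Ico.1 hκ).2 m y

lemma digitWeight_W_tent (hb : 1 < b) (z : ℕ → ZMod b) {a : ℕ} (ha : 0 < a) :
    digitWeight b (fun k => W b k (tent b z)) a = ((b : ℂ) ^ a)⁻¹ * L b z (a + 1) := by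
  obtain ⟨m, rfl⟩ := Nat.exists_eq_add_one.2 ha
  rw [digitWeight, Nat.add_sub_cancel, eq_sub_of_add_eq' (one_add_sum_W_mul_pow hb m _)]
  simp only [L, tent, sub_eq_zero, Nat.add_sub_cancel]
  split_ifs <;> simp

lemma mualphaSum_zero_W (hb : 1 < b) (y : ℕ → ZMod b) (m : ℕ) :
    mualphaSum b (fun k => W b k y) 0 m =
      (b : ℂ) ^ m * if ∀ i < m, y i = 0 then 1 else 0 := by
  have hW := isDigitMultiplicative_W hb y
  induction m with
  | zero => simp [mualphaSum_zero_right hW]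
  | succ m ih =>
    rw [mualphaSum_zero_succ (Nat.zero_lt_of_lt hb) hW, ih, one_add_sum_W_mul_pow hb]
    simp only [Nat.forall_lt_succ_right, ite_and]
    split_ifs <;> ring

end Walsh

theorem chi_tent_eq_general (b α : ℕ) (hb : 2 ≤ b) (hα : 2 ≤ α) (z : ℕ → ZMod b) :
    chi b α (tent b z) =
      (∑ v ∈ Finset.Icc 1 (α - 1), ∑' a : DecTuple v,
        ∏ i, ((b : ℂ) ^ a.1 i)⁻¹ * L b z (a.1 i + 1)) +
      ∑' a : DecTuple α,
        ((b : ℂ) ^ (a.1 ⟨α - 1, Nat.sub_one_lt_of_lt hα⟩ - 1)) *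
          (if ∀ i < a.1 ⟨α - 1, Nat.sub_one_lt_of_lt hα⟩ - 1, tent b z i = 0 then 1 else 0) *
          ∏ i, ((b : ℂ) ^ a.1 i)⁻¹ * L b z (a.1 i + 1) := by
  obtain ⟨w, rfl⟩ := Nat.exists_eq_add_of_le' hα
  have hprod {v : ℕ} (a : DecTuple v) :
      ∏ i, digitWeight b (fun k => W b k (tent b z)) (a.1 i) =
        ∏ i, ((b : ℂ) ^ a.1 i)⁻¹ * L b z (a.1 i + 1) :=
    Finset.prod_congr rfl fun i _ => digitWeight_W_tent hb z (a.2.2 i)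
  rw [chi, tsum_inv_pow_mualpha_mul_eq hb (isDigitMultiplicative_W hb (tent b z)) fun k =>
    (norm_W b k _).le]
  simp only [hprod, mualphaSum_zero_W hb, Nat.add_succ_sub_one]
  rw [Finset.range_eq_Ico, Finset.sum_Ico_add' (fun v => ∑' a : DecTuple v,
    ∏ i, ((b : ℂ) ^ a.1 i)⁻¹ * L b z (a.1 i + 1)), Finset.Ico_add_one_right_eq_Icc]
  rfl

/-- Explicit formula for `χ_b(Φ_b(z))` for a finitely supported `z ≠ 0`. -/
theorem chi_tent_eq (b α : ℕ) (hb : 2 ≤ b) (hα : 2 ≤ α) (z : ℕ → ZMod b) (n : ℕ)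
    (hfin : ∀ i, n ≤ i → z i = 0) (hnz : ∃ i, z i ≠ 0) :
    chi b α (tent b z) =
      (∑ v ∈ Finset.Icc 1 (α - 1), ∑' a : DecTuple v,
        ∏ i, ((b : ℂ) ^ a.1 i)⁻¹ * L b z (a.1 i + 1)) +
      ∑' a : DecTuple α,
        ((b : ℂ) ^ (a.1 ⟨α - 1, by omega⟩ - 1)) *
          (if ∀ i < a.1 ⟨α - 1, by omega⟩ - 1, tent b z i = 0 then 1 else 0) *
          ∏ i, ((b : ℂ) ^ a.1 i)⁻¹ * L b z (a.1 i + 1) := by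
  convert chi_tent_eq_general b α hb hα z

end QMC
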